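/- arXiv:2401.16439 — 2 statements merged into one kernel-verified Lean document; each statement's English description precedes it below -/
import Mathlib

section
/- Let D be a probability measure on ℝ^d, let c : ℝ^d → {−1,+1} be measurable, let μ > 0, and let g, g' : ℝ^d → {−1,+1} be measurable with P{g(x)=1} = P{g'(x)=1} = μ. Then 2μ·(d_D(c,g) − d_D(c,g')) = P{c(x)=g'(x)} − P{c(x)=g(x)}; consequently μ·|d_D(c,g)| = | μ·d_D(c,g') + (P{c(x)=g'(x)} − P{c(x)=g(x)})/2 |. -/
open MeasureTheory

/-- Statistical parity deviation `d_D(c,g) = P{c=1} − P{c=1 | g=1}`. -/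
noncomputable def dev {d : ℕ} (D : Measure (EuclideanSpace ℝ (Fin d)))
    (c g : EuclideanSpace ℝ (Fin d) → ℝ) : ℝ :=
  (D {x | c x = 1}).toReal -
    (D {x | c x = 1 ∧ g x = 1}).toReal / (D {x | g x = 1}).toReal

theorem agree_aux {d : ℕ} (D : Measure (EuclideanSpace ℝ (Fin d))) [IsProbabilityMeasure D]
    (c g : EuclideanSpace ℝ (Fin d) → ℝ) (hc : Measurable c) (hg : Measurable g)
    (hcval : ∀ x, c x = 1 ∨ c x = -1) (hgval : ∀ x, g x = 1 ∨ g x = -1) :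
    (D {x | c x = g x}).toReal = 1 - (D {x | c x = 1}).toReal - (D {x | g x = 1}).toReal
      + 2 * (D {x | c x = 1 ∧ g x = 1}).toReal := by
  have hA : MeasurableSet {x | c x = 1} := hc (measurableSet_singleton 1)
  have hB : MeasurableSet {x | g x = 1} := hg (measurableSet_singleton 1)
  have e : {x | c x = g x} =
      ({x | c x = 1} ∩ {x | g x = 1}) ∪ ({x | c x = 1} ∪ {x | g x = 1})ᶜ := by
    ext x
    simp only [Set.mem_setOf_eq, Set.mem_union, Set.mem_inter_iff, Set.mem_compl_iff]
    rcases hcval x with h | h <;> rcases hgval x with h2 | h2 <;> rw [h, h2] <;> norm_num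
  have h1 := measureReal_union_add_inter (μ := D) (s := {x | c x = 1}) hB
  have hd : Disjoint ({x | c x = 1} ∩ {x | g x = 1}) ({x | c x = 1} ∪ {x | g x = 1})ᶜ := by
    rw [Set.disjoint_compl_right_iff_subset]
    exact fun x hx => Or.inl hx.1
  have h2 := measureReal_union (μ := D) hd (hA.union hB).compl
  have h3 := probReal_compl_eq_one_sub (μ := D) (hA.union hB)
  change D.real {x | c x = g x} = 1 - D.real {x | c x = 1} - D.real {x | g x = 1}
      + 2 * D.real ({x | c x = 1} ∩ {x | g x = 1})
  rw [e]
  linarith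

/-- Central identity in the proof of Lemma 3.5: for subgroups of the same mass
`μ`, `2μ·(d_D(c,g) − d_D(c,g')) = P{c=g'} − P{c=g}`, hence
`μ·|d_D(c,g)| = |μ·d_D(c,g') + (P{c=g'} − P{c=g})/2|`. -/
theorem stmt_6 {d : ℕ} (D : Measure (EuclideanSpace ℝ (Fin d))) [IsProbabilityMeasure D]
    (c g g' : EuclideanSpace ℝ (Fin d) → ℝ)
    (hc : Measurable c) (hg : Measurable g) (hg' : Measurable g')
    (hcval : ∀ x, c x = 1 ∨ c x = -1)
    (hgval : ∀ x, g x = 1 ∨ g x = -1) (hg'val : ∀ x, g' x = 1 ∨ g' x = -1)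
    (μ : ℝ) (hμ : 0 < μ)
    (hmass : (D {x | g x = 1}).toReal = μ)
    (hmass' : (D {x | g' x = 1}).toReal = μ) :
    2 * μ * (dev D c g - dev D c g') =
      (D {x | c x = g' x}).toReal - (D {x | c x = g x}).toReal ∧
    μ * |dev D c g| =
      |μ * dev D c g' +
        ((D {x | c x = g' x}).toReal - (D {x | c x = g x}).toReal) / 2| := by
  have key : 2 * μ * (dev D c g - dev D c g') =
      (D {x | c x = g' x}).toReal - (D {x | c x = g x}).toReal := by
    rw [agree_aux D c g hc hg hcval hgval, agree_aux D c g' hc hg' hcval hg'val]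
    unfold dev
    rw [hmass, hmass']
    field_simp
    ring
  refine ⟨key, ?_⟩
  rw [← key, ← abs_of_pos hμ, ← abs_mul, abs_of_pos hμ]
  congr 1
  ring
end

section
/- Let D be a probability measure on ℝ^d whose one-dimensional marginals have continuous cumulative distribution functions, let c : ℝ^d → {−1,+1} be measurable, let 0 < a ≤ b < 1, let n be a positive integer, and let ε ≥ 0. Suppose that for each k ∈ {0,…,n} there is a halfspace h_k with P{h_k(x)=1} = α(k) = a + k(b−a)/n such that P{h_k(x)=1}·|d_D(c,h_k)| ≥ γ_k − ε, where γ_k is the supremum of P{h(x)=1}·|d_D(c,h)| over halfspaces h with P{h(x)=1} = α(k). Then max_{0≤k≤n} P{h_k(x)=1}·|d_D(c,h_k)| ≥ γ* − 2(b−a)/n − ε, where γ* is the supremum of P{h(x)=1}·|d_D(c,h)| over all halfspaces h with a ≤ P{h(x)=1} ≤ b. -/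
open MeasureTheory
open scoped RealInnerProductSpace

/-- The halfspace `x ↦ +1` if `⟨w,x⟩ ≥ t`, `−1` otherwise. -/
noncomputable def halfspace {d : ℕ} (w : EuclideanSpace ℝ (Fin d)) (t : ℝ) :
    EuclideanSpace ℝ (Fin d) → ℝ :=
  fun x => if t ≤ ⟪w, x⟫ then 1 else -1

/-- Weighted unfairness `P{h=1}·|d_D(c,h)|`. -/
noncomputable def unf {d : ℕ} (D : Measure (EuclideanSpace ℝ (Fin d)))
    (c h : EuclideanSpace ℝ (Fin d) → ℝ) : ℝ :=
  (D {x | h x = 1}).toReal * |dev D c h|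

theorem aux_set {d : ℕ} (w : EuclideanSpace ℝ (Fin d)) (t : ℝ) :
    {x | halfspace w t x = 1} = {x | t ≤ ⟪w, x⟫} := by
  ext x
  simp only [halfspace, Set.mem_ofPred_eq]
  split_ifs with h
  · simp [h]
  · simp only [h, iff_false]; norm_num

theorem aux_unf {d : ℕ} (D : Measure (EuclideanSpace ℝ (Fin d)))
    (c h : EuclideanSpace ℝ (Fin d) → ℝ) (hm : 0 < (D {x | h x = 1}).toReal) :
    unf D c h = |(D {x | c x = 1}).toReal * (D {x | h x = 1}).toReal -
      (D {x | c x = 1 ∧ h x = 1}).toReal| := by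
  unfold unf dev
  rw [← abs_of_pos hm, ← abs_mul, abs_of_pos hm]
  congr 1
  field_simp

theorem aux_unf_le {d : ℕ} (D : Measure (EuclideanSpace ℝ (Fin d))) [IsProbabilityMeasure D]
    (c h : EuclideanSpace ℝ (Fin d) → ℝ) (hm : 0 < (D {x | h x = 1}).toReal) :
    unf D c h ≤ 1 := by
  rw [aux_unf D c h hm]
  have h1 : (D {x | c x = 1}).toReal ≤ 1 := measureReal_le_one
  have h2 : (D {x | h x = 1}).toReal ≤ 1 := measureReal_le_one
  have h3 : (D {x | c x = 1 ∧ h x = 1}).toReal ≤ 1 := measureReal_le_one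
  have h4 : 0 ≤ (D {x | c x = 1}).toReal := ENNReal.toReal_nonneg
  have h5 : 0 ≤ (D {x | c x = 1 ∧ h x = 1}).toReal := ENNReal.toReal_nonneg
  rw [abs_le]
  constructor <;> nlinarith

theorem aux_ivt {d : ℕ} (D : Measure (EuclideanSpace ℝ (Fin d))) [IsProbabilityMeasure D]
    (hcont : ∀ u : EuclideanSpace ℝ (Fin d), u ≠ 0 →
      Continuous fun t : ℝ => (D {x | ⟪u, x⟫ ≤ t}).toReal)
    (w : EuclideanSpace ℝ (Fin d)) (hw : w ≠ 0) (t α : ℝ) (hα : α < 1)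
    (ht : (D {x | t ≤ ⟪w, x⟫}).toReal ≤ α) :
    ∃ s ≤ t, (D {x | s ≤ ⟪w, x⟫}).toReal = α := by
  have hG : Continuous fun t : ℝ => (D {x | t ≤ ⟪w, x⟫}).toReal := by
    have := (hcont (-w) (neg_ne_zero.mpr hw)).comp continuous_neg
    simpa [Function.comp_def, inner_neg_left] using this
  have hlim : Filter.Tendsto (fun t : ℝ => (D {x | -t ≤ ⟪w, x⟫}).toReal) Filter.atTop
      (nhds 1) := by
    have h1 := tendsto_measure_iUnion_atTop (μ := D)
      (s := fun t : ℝ => {x : EuclideanSpace ℝ (Fin d) | -t ≤ ⟪w, x⟫})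
      (by intro p q hpq x hx; simp only [Set.mem_ofPred_eq] at hx ⊢; linarith)
    have h2 : (⋃ t : ℝ, {x : EuclideanSpace ℝ (Fin d) | -t ≤ ⟪w, x⟫}) = Set.univ := by
      ext x
      simp only [Set.mem_iUnion, Set.mem_ofPred_eq, Set.mem_univ, iff_true]
      exact ⟨-⟪w, x⟫, by simp⟩
    rw [h2, measure_univ] at h1
    have := (ENNReal.tendsto_toReal ENNReal.one_ne_top).comp h1
    simpa [Function.comp_def] using this
  obtain ⟨r, hr1, hr2⟩ := ((hlim.eventually (lt_mem_nhds hα)).and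
    (Filter.eventually_ge_atTop (-t))).exists
  obtain ⟨s, hs, hs'⟩ := intermediate_value_Icc' (show -r ≤ t by linarith) hG.continuousOn
    ⟨ht, hr1.le⟩
  exact ⟨s, hs.2, hs'⟩

theorem aux_diff {d : ℕ} (D : Measure (EuclideanSpace ℝ (Fin d))) [IsProbabilityMeasure D]
    (c : EuclideanSpace ℝ (Fin d) → ℝ) (hc : Measurable c)
    (w : EuclideanSpace ℝ (Fin d)) (s t : ℝ) (hst : s ≤ t)
    (hm : 0 < (D {x | halfspace w t x = 1}).toReal) :
    unf D c (halfspace w t) ≤ unf D c (halfspace w s) +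
      2 * ((D {x | halfspace w s x = 1}).toReal - (D {x | halfspace w t x = 1}).toReal) := by
  have hmeas : ∀ r : ℝ, MeasurableSet {x : EuclideanSpace ℝ (Fin d) | r ≤ ⟪w, x⟫} := fun r =>
    measurableSet_le measurable_const (by fun_prop)
  have hC : MeasurableSet {x | c x = 1} := hc (measurableSet_singleton 1)
  have hsub : {x | halfspace w t x = 1} ⊆ {x | halfspace w s x = 1} := by
    rw [aux_set, aux_set]; intro x hx; exact hst.trans hx
  have hle : (D {x | halfspace w t x = 1}).toReal ≤ (D {x | halfspace w s x = 1}).toReal :=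
    measureReal_mono hsub
  rw [aux_unf _ _ _ hm, aux_unf _ _ _ (hm.trans_le hle)]
  have hq : (D {x | c x = 1 ∧ halfspace w t x = 1}).toReal ≤
      (D {x | c x = 1 ∧ halfspace w s x = 1}).toReal :=
    measureReal_mono (fun x hx => ⟨hx.1, hsub hx.2⟩)
  have hT : MeasurableSet {x | halfspace w t x = 1} := by rw [aux_set]; exact hmeas t
  have hq2 : (D {x | c x = 1 ∧ halfspace w s x = 1}).toReal ≤
      (D {x | c x = 1 ∧ halfspace w t x = 1}).toReal +
      ((D {x | halfspace w s x = 1}).toReal - (D {x | halfspace w t x = 1}).toReal) := by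
    have e1 : D.real ({x | halfspace w s x = 1} \ {x | halfspace w t x = 1}) =
        D.real {x | halfspace w s x = 1} - D.real {x | halfspace w t x = 1} :=
      measureReal_sdiff hsub hT
    have e2 : D.real {x | c x = 1 ∧ halfspace w s x = 1} ≤
        D.real ({x | c x = 1 ∧ halfspace w t x = 1} ∪
          ({x | halfspace w s x = 1} \ {x | halfspace w t x = 1})) := by
      refine measureReal_mono ?_
      intro x hx
      by_cases h : halfspace w t x = 1
      · exact Or.inl ⟨hx.1, h⟩
      · exact Or.inr ⟨hx.2, h⟩
    have e3 := measureReal_union_le (μ := D) {x | c x = 1 ∧ halfspace w t x = 1}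
          ({x | halfspace w s x = 1} \ {x | halfspace w t x = 1})
    rw [e1] at e3
    exact e2.trans e3
  have h1 : (D {x | c x = 1}).toReal ≤ 1 := measureReal_le_one
  have h0 : 0 ≤ (D {x | c x = 1}).toReal := ENNReal.toReal_nonneg
  generalize (D {x | c x = 1}).toReal = p at *
  generalize (D {x | halfspace w t x = 1}).toReal = m at *
  generalize (D {x | halfspace w s x = 1}).toReal = m' at *
  generalize (D {x | c x = 1 ∧ halfspace w t x = 1}).toReal = q at *
  generalize (D {x | c x = 1 ∧ halfspace w s x = 1}).toReal = q' at *
  have k1 : p * (m' - m) ≤ m' - m := by nlinarith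
  have k0 : 0 ≤ p * (m' - m) := mul_nonneg h0 (by linarith)
  have := le_abs_self (p * m' - q')
  have := neg_abs_le (p * m' - q')
  rw [abs_le]
  constructor <;> linarith

theorem aux_grid (a b m : ℝ) (hab : a ≤ b) (n : ℕ) (hn : 0 < n) (h1 : a ≤ m) (h2 : m ≤ b) :
    ∃ k ≤ n, m ≤ a + (k : ℕ) * (b - a) / n ∧ a + k * (b - a) / n - m ≤ (b - a) / n ∧
      a + k * (b - a) / n ≤ b := by
  have hn' : (0 : ℝ) < n := by exact_mod_cast hn
  rcases hab.eq_or_lt with rfl | hlt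
  · exact ⟨0, Nat.zero_le _, by simp; linarith, by simp; linarith, by simp⟩
  have hpos : 0 < b - a := by linarith
  have hx0 : 0 ≤ (m - a) * n / (b - a) := by
    apply div_nonneg (mul_nonneg (by linarith) hn'.le) hpos.le
  have hkn : ⌈(m - a) * n / (b - a)⌉₊ ≤ n := by
    rw [Nat.ceil_le, div_le_iff₀ hpos]; nlinarith
  have hk1 := Nat.le_ceil ((m - a) * n / (b - a))
  have hk2 := Nat.ceil_lt_add_one hx0
  generalize ⌈(m - a) * n / (b - a)⌉₊ = k at *
  have hkn' : (k : ℝ) ≤ n := by exact_mod_cast hkn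
  rw [div_le_iff₀ hpos] at hk1
  rw [← sub_lt_iff_lt_add, lt_div_iff₀ hpos] at hk2
  refine ⟨k, hkn, ?_, ?_, ?_⟩
  · have : m - a ≤ k * (b - a) / n := by rw [le_div_iff₀ hn']; exact hk1
    linarith
  · have : (k * (b - a) - (b - a)) / n ≤ m - a := by rw [div_le_iff₀ hn']; nlinarith
    rw [sub_div] at this
    linarith
  · have : k * (b - a) / n ≤ b - a := by rw [div_le_iff₀ hn']; nlinarith
    linarith

/-- Deterministic correctness core of Theorem 5.1: per-grid-point ε-approximate
maximizers of weighted unfairness yield a certificate within `2(b−a)/n + ε` of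
the most unfair halfspace subgroup of mass between `a` and `b`. -/
theorem stmt_15 {d : ℕ} (D : Measure (EuclideanSpace ℝ (Fin d))) [IsProbabilityMeasure D]
    (hcont : ∀ u : EuclideanSpace ℝ (Fin d), u ≠ 0 →
      Continuous fun t : ℝ => (D {x | ⟪u, x⟫ ≤ t}).toReal)
    (c : EuclideanSpace ℝ (Fin d) → ℝ) (hc : Measurable c)
    (hcval : ∀ x, c x = 1 ∨ c x = -1)
    (a b : ℝ) (ha : 0 < a) (hab : a ≤ b) (hb : b < 1)
    (n : ℕ) (hn : 0 < n) (ε : ℝ) (hε : 0 ≤ ε)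
    (γ : ℕ → ℝ)
    (hγ : ∀ k ≤ n, γ k = sSup {r : ℝ | ∃ w : EuclideanSpace ℝ (Fin d), w ≠ 0 ∧
      ∃ t : ℝ, (D {x | halfspace w t x = 1}).toReal = a + k * (b - a) / n ∧
        r = unf D c (halfspace w t)})
    (γS : ℝ)
    (hγS : γS = sSup {r : ℝ | ∃ w : EuclideanSpace ℝ (Fin d), w ≠ 0 ∧ ∃ t : ℝ,
      a ≤ (D {x | halfspace w t x = 1}).toReal ∧
      (D {x | halfspace w t x = 1}).toReal ≤ b ∧
      r = unf D c (halfspace w t)})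
    (wk : ℕ → EuclideanSpace ℝ (Fin d)) (tk : ℕ → ℝ)
    (hwk : ∀ k ≤ n, wk k ≠ 0)
    (hmassk : ∀ k ≤ n,
      (D {x | halfspace (wk k) (tk k) x = 1}).toReal = a + k * (b - a) / n)
    (happroxk : ∀ k ≤ n, unf D c (halfspace (wk k) (tk k)) ≥ γ k - ε) :
    ∃ k ≤ n, unf D c (halfspace (wk k) (tk k)) ≥ γS - 2 * (b - a) / n - ε := by
  obtain ⟨k0, hk0, hmax⟩ := Finset.exists_max_image (Finset.range (n + 1))
    (fun k => unf D c (halfspace (wk k) (tk k))) ⟨0, by simp⟩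
  refine ⟨k0, by simpa [Nat.lt_succ_iff] using hk0, ?_⟩
  suffices hS : γS ≤ unf D c (halfspace (wk k0) (tk k0)) + 2 * (b - a) / n + ε by linarith
  rw [hγS]
  apply csSup_le
  · have h0 := hmassk 0 (Nat.zero_le _)
    simp only [Nat.cast_zero, zero_mul, zero_div, add_zero] at h0
    exact ⟨_, wk 0, hwk 0 (Nat.zero_le _), tk 0, h0.ge, h0.le.trans hab, rfl⟩
  rintro r ⟨w, hw, t, h1, h2, rfl⟩
  obtain ⟨k, hk, hk1, hk2, hk3⟩ := aux_grid a b _ hab n hn h1 h2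
  obtain ⟨s, hst, hs⟩ := aux_ivt D hcont w hw t (a + k * (b - a) / n) (by linarith)
    (by rw [← aux_set]; exact hk1)
  rw [← aux_set] at hs
  have hd := aux_diff D c hc w s t hst (ha.trans_le h1)
  rw [hs] at hd
  have hle : unf D c (halfspace w s) ≤ γ k := by
    rw [hγ k hk]
    apply le_csSup
    · refine ⟨1, ?_⟩
      rintro r ⟨w', _, t', h', rfl⟩
      exact aux_unf_le D c _ (by rw [h']; linarith)
    · exact ⟨w, hw, s, hs, rfl⟩
  have hm := hmax k (by simpa [Nat.lt_succ_iff] using hk)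
  have ha' := happroxk k hk
  have e : 2 * (b - a) / n = 2 * ((b - a) / n) := by ring
  rw [e]
  linarith
end
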